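/- arXiv:math/0112079 — 3 statements merged into one kernel-verified Lean document; each statement's English description precedes it below -/
import Mathlib

section
/- Under the Gr_{p,q}(1|1) relations, for every integer n ≥ 1, writing A, B, C, D for the (1,1)-, (1,2)-, (2,1)-, (2,2)-entries of the matrix power Â^{2n−1}, these entries satisfy the Gr_{P,Q}(1|1) relations with deformation parameters P = p^{2n−1} and Q = q^{2n−1}; that is: AB = P⁻¹BA, AC = Q⁻¹CA, DB = P⁻¹BD, DC = Q⁻¹CD, AD + DA = 0, A² = 0 = D², and BC = PQ⁻¹CB + (P − Q⁻¹)DA. -/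
/-!
Put `s = p⁻¹` and `t = q⁻¹`. Clearing denominators, the last relation becomes
`s bc = t cb + (1 - st) δα`, and the relations are invariant under exchanging `α` with `δ`, `b`
with `c` and `s` with `t`. With `[k] = 1 + st + ⋯ + (st) ^ (k - 1)`, the entries of the
`(2m+1)`-st power are `A = (bc) ^ m ([m + 1] α + t [m] δ)` and `B = b (cb + s αδ) ^ m`, with `D`
and `C` their images under the exchange. Multiplication by `αδ` or `δα` kills every odd element,
so next to an odd element all even factors become powers of `bc` or `cb`, and `s bc` may be
replaced by `t cb`. The relation between `B` and `C` comes down to an identity between the numbers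
`[k]` for the bases `st` and `(st) ^ 2`.
-/

/-- The `q`-number `[m] = 1 + e + ⋯ + e ^ (m - 1)`. -/
def qNumber {R : Type*} [Semiring R] (e : R) (m : ℕ) : R := ∑ i ∈ Finset.range m, e ^ i

section qNumber

variable {R : Type*}

section Semiring

variable [Semiring R] (e : R) (m : ℕ)

theorem qNumber_zero : qNumber e 0 = 0 := Finset.sum_range_zero _

theorem qNumber_succ : qNumber e (m + 1) = qNumber e m + e ^ m := Finset.sum_range_succ _ _

theorem qNumber_add (n : ℕ) : qNumber e (m + n) = qNumber e m + e ^ m * qNumber e n := by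
  simp only [qNumber, Finset.sum_range_add, Finset.mul_sum, pow_add]

end Semiring

theorem one_sub_mul_qNumber [Ring R] (e : R) (m : ℕ) : (1 - e) * qNumber e m = 1 - e ^ m :=
  mul_neg_geom_sum e m

variable [CommRing R] (e : R) (m : ℕ)

theorem one_add_mul_qNumber_sq :
    (1 + e) * qNumber (e ^ 2) m = (1 + e ^ m) * qNumber e m := by
  induction m with
  | zero => simp only [qNumber_zero, mul_zero]
  | succ m ih =>
    rw [qNumber_succ, qNumber_succ]
    linear_combination ih + e ^ m * one_sub_mul_qNumber e m

theorem one_sub_pow_mul_qNumber_sq_sub :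
    (1 - e ^ (2 * m + 1)) * (qNumber e (m + 1) ^ 2 - e * qNumber e m ^ 2) =
      (1 - e) * qNumber (e ^ 2) (2 * m + 1) +
        2 * e * (1 - e ^ (2 * m + 1)) * qNumber (e ^ 2) m := by
  have geom : e ^ m = 1 - (1 - e) * qNumber e m := by rw [one_sub_mul_qNumber, sub_sub_cancel]
  have double := one_add_mul_qNumber_sq e m
  rw [qNumber_succ (e ^ 2), two_mul m, qNumber_add (e ^ 2), qNumber_succ e]
  simp only [pow_add, ← pow_mul, mul_comm 2 m, pow_one]
  simp only [pow_mul, geom] at double ⊢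
  generalize qNumber e m = g at double ⊢
  linear_combination -(1 + (1 - 2 * e) * (1 - (1 - e) * g) ^ 2) * double

end qNumber

/-- The elements `x` and `y` commute up to the scalar `e`. -/
def QCommute {R A : Type*} [CommSemiring R] [Semiring A] [Algebra R A] (e : R) (x y : A) : Prop :=
  x * y = e • (y * x)

namespace QCommute

variable {R A : Type*} [CommSemiring R] [Semiring A] [Algebra R A] {e f : R} {v w x y z : A}

theorem mul_left (hx : QCommute e x z) (hy : QCommute f y z) : QCommute (e * f) (x * y) z := by
  rw [QCommute, mul_assoc, hy, mul_smul_comm, ← mul_assoc, hx, smul_mul_assoc, smul_smul,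
    mul_comm f, mul_assoc]

theorem mul_right (hy : QCommute e x y) (hz : QCommute f x z) : QCommute (e * f) x (y * z) := by
  rw [QCommute, ← mul_assoc, hy, smul_mul_assoc, mul_assoc, hz, mul_smul_comm, smul_smul, mul_assoc]

theorem add_left (hx : QCommute e x z) (hy : QCommute e y z) : QCommute e (x + y) z := by
  rw [QCommute, add_mul, hx, hy, mul_add, smul_add]

theorem smul_left (r : R) (h : QCommute e x y) : QCommute e (r • x) y := by
  rw [QCommute, smul_mul_assoc, h, mul_smul_comm, smul_comm]

theorem smul_right (r : R) (h : QCommute e x y) : QCommute e x (r • y) := by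
  rw [QCommute, smul_mul_assoc, mul_smul_comm, h, smul_comm]

theorem pow_right (h : QCommute e x y) (m : ℕ) : QCommute (e ^ m) x (y ^ m) := by
  induction m with
  | zero => simp [QCommute]
  | succ m ih => simpa only [pow_succ] using ih.mul_right h

theorem mul_pow_mul_eq_zero (h : QCommute e w v) (hwx : w * x = 0) (m : ℕ) :
    w * (v ^ m * x) = 0 := by
  rw [← mul_assoc, h.pow_right m, smul_mul_assoc, mul_assoc, hwx, mul_zero, smul_zero]

theorem add_pow_mul (h : QCommute e w v) (hwx : w * x = 0) (m : ℕ) :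
    (v + w) ^ m * x = v ^ m * x := by
  induction m with
  | zero => simp only [pow_zero]
  | succ m ih =>
    rw [pow_succ', mul_assoc, ih, add_mul, h.mul_pow_mul_eq_zero hwx, add_zero, ← mul_assoc,
      ← pow_succ']

theorem mul_add_pow (h : QCommute e x v) (hxw : x * w = 0) (m : ℕ) :
    x * (v + w) ^ m = e ^ m • (v ^ m * x) := by
  induction m with
  | zero => simp
  | succ m ih =>
    rw [pow_succ, ← mul_assoc, ih, smul_mul_assoc, mul_assoc, mul_add, hxw, add_zero, h,
      mul_smul_comm, smul_smul, ← mul_assoc, ← pow_succ, ← pow_succ]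

theorem add_pow_succ (h : QCommute e w v) (hw : w * w = 0) (m : ℕ) :
    (v + w) ^ (m + 1) = v ^ (m + 1) + qNumber e (m + 1) • (v ^ m * w) := by
  induction m with
  | zero => simp [qNumber]
  | succ m ih =>
    rw [pow_succ', ih, mul_add, add_mul, h.pow_right (m + 1), mul_smul_comm, add_mul,
      h.mul_pow_mul_eq_zero hw, add_zero, ← mul_assoc, ← pow_succ', ← pow_succ', add_assoc,
      ← add_smul, add_comm (e ^ _), ← qNumber_succ]

theorem self_mul_add_pow (h : QCommute e w v) (hw : w * w = 0) (m : ℕ) :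
    v * (v + w) ^ m = v ^ (m + 1) + qNumber e m • (v ^ m * w) := by
  cases m with
  | zero => simp [qNumber_zero]
  | succ m =>
    rw [h.add_pow_succ hw, mul_add, mul_smul_comm, ← mul_assoc, ← pow_succ', ← pow_succ']

theorem self_mul_add_pow_mul_add_pow (hx : QCommute e x v) (hy : QCommute e y v)
    (hxx : x * x = 0) (hxy : x * y = 0) (hyy : y * y = 0) (m : ℕ) :
    v * ((v + x) ^ m * (v + y) ^ m) =
      v ^ (2 * m + 1) + qNumber e m • (v ^ (2 * m) * (e ^ m • x + y)) := by
  calc v * ((v + x) ^ m * (v + y) ^ m)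
      = v ^ m * (v * (v + y) ^ m) + qNumber e m • (v ^ m * (x * (v + y) ^ m)) := by
        rw [← mul_assoc, hx.self_mul_add_pow hxx, add_mul, pow_succ, smul_mul_assoc, mul_assoc,
          mul_assoc]
    _ = v ^ (2 * m + 1) + qNumber e m • (v ^ (2 * m) * (e ^ m • x + y)) := by
        rw [hy.self_mul_add_pow hyy, hx.mul_add_pow hxy]
        simp only [mul_add, mul_smul_comm, ← mul_assoc, ← pow_add, two_mul, ← add_assoc]
        module

end QCommute

/-- The `Gr_{p,q}(1|1)` relations, encoded with `s = p⁻¹` and `t = q⁻¹`. The relation between `b`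
and `c` is multiplied by `s`, so that the relations make sense for arbitrary scalars. -/
structure GrassmannRelations {R A : Type*} [CommRing R] [Ring A] [Algebra R A]
    (s t : R) (α b c δ : A) : Prop where
  alpha_b : QCommute s α b
  alpha_c : QCommute t α c
  delta_b : QCommute s δ b
  delta_c : QCommute t δ c
  alpha_delta : α * δ + δ * α = 0
  alpha_sq : α ^ 2 = 0
  delta_sq : δ ^ 2 = 0
  b_c : s • (b * c) = t • (c * b) + (1 - s * t) • (δ * α)

/-- The upper left entry of the `(2m+1)`-st power of the matrix `(α, b; c, δ)`. The lower right
entry is obtained by exchanging `α` with `δ`, `b` with `c` and `s` with `t`. -/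
def grassmannDiagEntry {R A : Type*} [CommRing R] [Ring A] [Algebra R A]
    (s t : R) (α b c δ : A) (m : ℕ) : A :=
  (b * c) ^ m * (qNumber (s * t) (m + 1) • α + (t * qNumber (s * t) m) • δ)

/-- The upper right entry of the `(2m+1)`-st power of the matrix `(α, b; c, δ)`. The lower left
entry is obtained by exchanging `α` with `δ`, `b` with `c` and `s` with `t`. -/
def grassmannOffDiagEntry {R A : Type*} [CommRing R] [Ring A] [Algebra R A]
    (s : R) (α b c δ : A) (m : ℕ) : A :=
  b * (c * b + s • (α * δ)) ^ m

namespace GrassmannRelations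

variable {R A : Type*} [CommRing R] [Ring A] [Algebra R A] {s t : R} {α b c δ : A}

theorem alpha_mul_delta (h : GrassmannRelations s t α b c δ) : α * δ = -(δ * α) :=
  eq_neg_of_add_eq_zero_left h.alpha_delta

theorem swap (h : GrassmannRelations s t α b c δ) : GrassmannRelations t s δ c b α where
  alpha_b := h.delta_c
  alpha_c := h.delta_b
  delta_b := h.alpha_c
  delta_c := h.alpha_b
  alpha_delta := by rw [add_comm, h.alpha_delta]
  alpha_sq := h.delta_sq
  delta_sq := h.alpha_sq
  b_c := by
    rw [h.b_c, h.alpha_mul_delta]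
    module

theorem odd_mul_odd (h : GrassmannRelations s t α b c δ) (x y x' y' : R) :
    (x • α + y • δ) * (x' • α + y' • δ) = (y * x' - x * y') • (δ * α) := by
  simp only [add_mul, mul_add, smul_mul_smul_comm, ← pow_two, h.alpha_sq, h.delta_sq,
    h.alpha_mul_delta]
  module

theorem odd_mul_delta_alpha (h : GrassmannRelations s t α b c δ) (x y : R) :
    (x • α + y • δ) * (δ * α) = 0 := by
  have hα : α * (δ * α) = 0 := by
    rw [← mul_assoc, h.alpha_mul_delta, neg_mul, mul_assoc, ← pow_two, h.alpha_sq, mul_zero,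
      neg_zero]
  rw [add_mul, smul_mul_assoc, smul_mul_assoc, hα, ← mul_assoc, ← pow_two, h.delta_sq, zero_mul,
    smul_zero, smul_zero, add_zero]

theorem delta_alpha_mul_odd (h : GrassmannRelations s t α b c δ) (x y : R) :
    (δ * α) * (x • α + y • δ) = 0 := by
  have hδ : δ * α * δ = 0 := by
    rw [mul_assoc, h.alpha_mul_delta, mul_neg, ← mul_assoc, ← pow_two, h.delta_sq, zero_mul,
      neg_zero]
  rw [mul_add, mul_smul_comm, mul_smul_comm, hδ, mul_assoc, ← pow_two, h.alpha_sq, mul_zero,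
    smul_zero, smul_zero, add_zero]

theorem delta_alpha_mul_self (h : GrassmannRelations s t α b c δ) : δ * α * (δ * α) = 0 := by
  simpa [mul_assoc] using congrArg (δ * ·) (h.odd_mul_delta_alpha 1 0)

theorem odd_qCommute_b (h : GrassmannRelations s t α b c δ) (x y : R) :
    QCommute s (x • α + y • δ) b :=
  (h.alpha_b.smul_left x).add_left (h.delta_b.smul_left y)

theorem odd_qCommute_c (h : GrassmannRelations s t α b c δ) (x y : R) :
    QCommute t (x • α + y • δ) c :=
  (h.alpha_c.smul_left x).add_left (h.delta_c.smul_left y)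

theorem odd_qCommute_bc (h : GrassmannRelations s t α b c δ) (x y : R) :
    QCommute (s * t) (x • α + y • δ) (b * c) :=
  (h.odd_qCommute_b x y).mul_right (h.odd_qCommute_c x y)

theorem odd_qCommute_cb (h : GrassmannRelations s t α b c δ) (x y : R) :
    QCommute (s * t) (x • α + y • δ) (c * b) :=
  mul_comm t s ▸ (h.odd_qCommute_c x y).mul_right (h.odd_qCommute_b x y)

theorem odd_mul_bc_pow_mul_odd (h : GrassmannRelations s t α b c δ) (x y x' y' : R) (m : ℕ) :
    (x • α + y • δ) * ((b * c) ^ m * (x' • α + y' • δ)) =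
      ((s * t) ^ m * (y * x' - x * y')) • ((b * c) ^ m * (δ * α)) := by
  rw [← mul_assoc, (h.odd_qCommute_bc x y).pow_right m, smul_mul_assoc, mul_assoc, h.odd_mul_odd,
    mul_smul_comm, smul_smul]

theorem delta_alpha_qCommute_bc (h : GrassmannRelations s t α b c δ) :
    QCommute ((s * t) ^ 2) (δ * α) (b * c) :=
  pow_two (s * t) ▸ (h.delta_b.mul_right h.delta_c).mul_left (h.alpha_b.mul_right h.alpha_c)

theorem delta_alpha_qCommute_cb (h : GrassmannRelations s t α b c δ) :
    QCommute ((s * t) ^ 2) (δ * α) (c * b) := by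
  simpa only [mul_comm s t, pow_two] using
    (h.delta_c.mul_right h.delta_b).mul_left (h.alpha_c.mul_right h.alpha_b)

theorem smul_alpha_delta_qCommute_cb (h : GrassmannRelations s t α b c δ) :
    QCommute ((s * t) ^ 2) (s • (α * δ)) (c * b) :=
  mul_comm t s ▸ h.swap.delta_alpha_qCommute_bc.smul_left s

theorem odd_mul_offDiagEntry (h : GrassmannRelations s t α b c δ) (x y : R) (m : ℕ) :
    (x • α + y • δ) * grassmannOffDiagEntry s α b c δ m =
      (s * (s * t) ^ m) • (b * ((c * b) ^ m * (x • α + y • δ))) := by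
  have vanish : (x • α + y • δ) * (s • (α * δ)) = 0 := by
    rw [h.alpha_mul_delta, mul_smul_comm, mul_neg, h.odd_mul_delta_alpha, neg_zero, smul_zero]
  rw [grassmannOffDiagEntry, ← mul_assoc, h.odd_qCommute_b x y, smul_mul_assoc, mul_assoc,
    (h.odd_qCommute_cb x y).mul_add_pow vanish, mul_smul_comm, smul_smul]

theorem odd_mul_offDiagEntry_swap (h : GrassmannRelations s t α b c δ) (x y : R) (m : ℕ) :
    (x • α + y • δ) * grassmannOffDiagEntry t δ c b α m =
      (t * (s * t) ^ m) • (c * ((b * c) ^ m * (x • α + y • δ))) := by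
  rw [add_comm, h.swap.odd_mul_offDiagEntry, mul_comm t s]

theorem diagEntry_succ (h : GrassmannRelations s t α b c δ) (m : ℕ) :
    b * c * grassmannDiagEntry s t α b c δ m +
        b * (s • α + δ) * grassmannOffDiagEntry t δ c b α m =
      grassmannDiagEntry s t α b c δ (m + 1) := by
  have odd := h.odd_mul_offDiagEntry_swap s 1 m
  rw [one_smul] at odd
  rw [mul_assoc b (s • α + δ), odd, mul_smul_comm, ← mul_assoc b c, ← mul_assoc (b * c),
    ← pow_succ', grassmannDiagEntry, ← mul_assoc, ← pow_succ', ← mul_smul_comm, ← mul_add,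
    grassmannDiagEntry, qNumber_succ _ (m + 1), qNumber_succ]
  congr 1
  module

theorem offDiagEntry_succ (h : GrassmannRelations s t α b c δ) (m : ℕ) :
    b * c * grassmannOffDiagEntry s α b c δ m +
        b * (s • α + δ) * grassmannDiagEntry t s δ c b α m =
      grassmannOffDiagEntry s α b c δ (m + 1) := by
  have odd : (s • α + δ) * grassmannDiagEntry t s δ c b α m =
      (s * ((s * t) ^ 2) ^ m) • ((c * b) ^ m * (α * δ)) := by
    have prod :=
      h.swap.odd_mul_bc_pow_mul_odd 1 s (qNumber (t * s) (m + 1)) (s * qNumber (t * s) m) m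
    rw [one_smul, add_comm δ] at prod
    rw [grassmannDiagEntry, prod, qNumber_succ, mul_comm t s]
    module
  have vanish : s • (α * δ) * (s • (α * δ)) = 0 := by
    rw [smul_mul_smul_comm, h.swap.delta_alpha_mul_self, smul_zero]
  rw [mul_assoc b (s • α + δ), odd, grassmannOffDiagEntry, grassmannOffDiagEntry, mul_assoc b c,
    ← mul_assoc c b, ← mul_add, pow_succ' _ m, add_mul,
    h.smul_alpha_delta_qCommute_cb.mul_add_pow vanish, mul_smul_comm, smul_smul, mul_comm s]

theorem matrix_sq (h : GrassmannRelations s t α b c δ) :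
    !![α, b; c, δ] ^ 2 = !![b * c, b * (s • α + δ); c * (t • δ + α), c * b] := by
  rw [pow_two, Matrix.mul_fin_two, ← pow_two, ← pow_two, h.alpha_sq, h.delta_sq, h.alpha_b,
    h.delta_c, zero_add, add_zero, mul_add, mul_add, mul_smul_comm, mul_smul_comm,
    add_comm (c * α)]

theorem matrix_odd_pow (h : GrassmannRelations s t α b c δ) (m : ℕ) :
    !![α, b; c, δ] ^ (2 * m + 1) =
      !![grassmannDiagEntry s t α b c δ m, grassmannOffDiagEntry s α b c δ m;
        grassmannOffDiagEntry t δ c b α m, grassmannDiagEntry t s δ c b α m] := by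
  induction m with
  | zero => simp [grassmannDiagEntry, grassmannOffDiagEntry, qNumber]
  | succ m ih =>
    rw [show 2 * (m + 1) + 1 = 2 + (2 * m + 1) by ring, pow_add, ih, h.matrix_sq,
      Matrix.mul_fin_two, h.diagEntry_succ, h.offDiagEntry_succ, add_comm (c * _ * _),
      h.swap.offDiagEntry_succ, add_comm (c * _ * _), h.swap.diagEntry_succ]

theorem smul_bc_pow_mul (h : GrassmannRelations s t α b c δ) {x : A} (hx : δ * α * x = 0) (m : ℕ) :
    s ^ m • ((b * c) ^ m * x) = t ^ m • ((c * b) ^ m * x) := by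
  have vanish : ((1 - s * t) • (δ * α)) * x = 0 := by rw [smul_mul_assoc, hx, smul_zero]
  rw [← smul_mul_assoc, ← smul_mul_assoc, ← smul_pow, ← smul_pow, h.b_c,
    ((h.delta_alpha_qCommute_cb.smul_left _).smul_right t).add_pow_mul vanish]

theorem offDiagEntry_mul (h : GrassmannRelations s t α b c δ) {x : A} (hx : δ * α * x = 0)
    (m : ℕ) : grassmannOffDiagEntry s α b c δ m * x = b * ((c * b) ^ m * x) := by
  have vanish : s • (α * δ) * x = 0 := by
    rw [h.alpha_mul_delta, smul_mul_assoc, neg_mul, hx, neg_zero, smul_zero]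
  rw [grassmannOffDiagEntry, mul_assoc, h.smul_alpha_delta_qCommute_cb.add_pow_mul vanish]

theorem delta_alpha_mul_diagEntry (h : GrassmannRelations s t α b c δ) (m : ℕ) :
    δ * α * grassmannDiagEntry s t α b c δ m = 0 :=
  h.delta_alpha_qCommute_bc.mul_pow_mul_eq_zero (h.delta_alpha_mul_odd _ _) m

theorem diagEntry_qCommute_offDiagEntry (h : GrassmannRelations s t α b c δ) (m : ℕ) :
    QCommute (s ^ (2 * m + 1)) (grassmannDiagEntry s t α b c δ m)
      (grassmannOffDiagEntry s α b c δ m) := by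
  rw [QCommute, h.offDiagEntry_mul (h.delta_alpha_mul_diagEntry m), grassmannDiagEntry]
  set o := qNumber (s * t) (m + 1) • α + (t * qNumber (s * t) m) • δ
  have slide : (b * c) ^ m * b = b * (c * b) ^ m :=
    (SemiconjBy.pow_right (mul_assoc b c b).symm m).eq.symm
  calc (b * c) ^ m * o * grassmannOffDiagEntry s α b c δ m
      = (s * (s * t) ^ m) • (b * ((c * b) ^ m * ((c * b) ^ m * o))) := by
        rw [mul_assoc, h.odd_mul_offDiagEntry, mul_smul_comm, ← mul_assoc, slide, mul_assoc]
    _ = s ^ (m + 1) • (b * ((c * b) ^ m * (t ^ m • ((c * b) ^ m * o)))) := by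
        simp only [mul_smul_comm]
        module
    _ = s ^ (2 * m + 1) • (b * ((c * b) ^ m * ((b * c) ^ m * o))) := by
        rw [← h.smul_bc_pow_mul (h.delta_alpha_mul_odd _ _)]
        simp only [mul_smul_comm]
        module

theorem diagEntry_qCommute_offDiagEntry_swap (h : GrassmannRelations s t α b c δ) (m : ℕ) :
    QCommute (t ^ (2 * m + 1)) (grassmannDiagEntry s t α b c δ m)
      (grassmannOffDiagEntry t δ c b α m) := by
  set D := grassmannDiagEntry s t α b c δ m with hD
  have vanish : δ * α * D = 0 := h.delta_alpha_mul_diagEntry m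
  have vanish_swap : α * δ * D = 0 := by rw [h.alpha_mul_delta, neg_mul, vanish, neg_zero]
  have vanish_c : δ * α * (c * D) = 0 := by
    simpa using (h.delta_c.mul_left h.alpha_c).mul_pow_mul_eq_zero vanish 1
  have slide : c * (b * c) ^ m = (c * b) ^ m * c :=
    (SemiconjBy.pow_right (mul_assoc c b c).symm m).eq
  rw [QCommute, h.swap.offDiagEntry_mul vanish_swap]
  calc D * grassmannOffDiagEntry t δ c b α m
      = (t * (s * t) ^ m) • ((b * c) ^ m * (c * D)) := by
        rw [hD, grassmannDiagEntry, mul_assoc, h.odd_mul_offDiagEntry_swap, mul_smul_comm]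
    _ = t ^ (m + 1) • (s ^ m • ((b * c) ^ m * (c * D))) := by
        module
    _ = t ^ (2 * m + 1) • (c * ((b * c) ^ m * D)) := by
        rw [h.smul_bc_pow_mul vanish_c, ← mul_assoc _ c, ← slide, mul_assoc]
        module

theorem smul_bc_pow_succ (h : GrassmannRelations s t α b c δ) (m : ℕ) :
    s ^ (m + 1) • (b * c) ^ (m + 1) = t ^ (m + 1) • (c * b) ^ (m + 1) +
      ((1 - s * t) * qNumber ((s * t) ^ 2) (m + 1)) • (t ^ m • ((c * b) ^ m * (δ * α))) := by
  have comm := (h.delta_alpha_qCommute_cb.smul_left (1 - s * t)).smul_right t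
  have vanish : (1 - s * t) • (δ * α) * (1 - s * t) • (δ * α) = 0 := by
    rw [smul_mul_smul_comm, h.delta_alpha_mul_self, smul_zero]
  rw [← smul_pow, h.b_c, comm.add_pow_succ vanish]
  simp only [smul_pow, smul_mul_assoc, mul_smul_comm]
  module

theorem diagEntry_sq (h : GrassmannRelations s t α b c δ) (m : ℕ) :
    grassmannDiagEntry s t α b c δ m ^ 2 = 0 := by
  rw [pow_two, grassmannDiagEntry, mul_assoc, h.odd_mul_bc_pow_mul_odd,
    sub_eq_zero.mpr (mul_comm _ _), mul_zero, zero_smul, mul_zero]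

theorem diagEntry_swap_mul_diagEntry (h : GrassmannRelations s t α b c δ) (m : ℕ) :
    grassmannDiagEntry t s δ c b α m * grassmannDiagEntry s t α b c δ m =
      (s ^ (2 * m) * (qNumber (s * t) (m + 1) ^ 2 - s * t * qNumber (s * t) m ^ 2)) •
        ((b * c) ^ (2 * m) * (δ * α)) := by
  have vanish : δ * α * ((b * c) ^ m * (δ * α)) = 0 :=
    h.delta_alpha_qCommute_bc.mul_pow_mul_eq_zero h.delta_alpha_mul_self m
  rw [grassmannDiagEntry, grassmannDiagEntry, mul_comm t s, add_comm (_ • δ), mul_assoc,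
    h.odd_mul_bc_pow_mul_odd, two_mul, pow_add (b * c), mul_assoc ((b * c) ^ m)]
  set d := qNumber (s * t) (m + 1) ^ 2 - s * t * qNumber (s * t) m ^ 2 with hd
  calc _ = (s ^ m * d) • (t ^ m • ((c * b) ^ m * ((b * c) ^ m * (δ * α)))) := by
        rw [mul_smul_comm, hd]
        module
    _ = (s ^ m * d) • (s ^ m • ((b * c) ^ m * ((b * c) ^ m * (δ * α)))) := by
        rw [h.smul_bc_pow_mul vanish]
    _ = (s ^ (m + m) * d) • ((b * c) ^ m * ((b * c) ^ m * (δ * α))) := by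
        module

theorem offDiagEntry_mul_offDiagEntry_swap (h : GrassmannRelations s t α b c δ) (m : ℕ) :
    grassmannOffDiagEntry s α b c δ m * grassmannOffDiagEntry t δ c b α m =
      (b * c) ^ (2 * m + 1) +
        (t * qNumber ((s * t) ^ 2) m * (1 - (s * t) ^ (2 * m + 1))) •
          ((b * c) ^ (2 * m) * (δ * α)) := by
  have slide : (c * b + s • (α * δ)) ^ m * c = c * (b * c + (s * t ^ 2) • (α * δ)) ^ m := by
    refine (SemiconjBy.pow_right ?_ m).eq.symm
    rw [SemiconjBy, add_mul, smul_mul_assoc, h.alpha_c.mul_left h.delta_c, mul_add, mul_smul_comm,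
      mul_assoc, smul_smul, pow_two]
  have vanish (x y : R) : x • (δ * α) * y • (δ * α) = 0 := by
    rw [smul_mul_smul_comm, h.delta_alpha_mul_self, smul_zero]
  rw [grassmannOffDiagEntry, grassmannOffDiagEntry, mul_assoc, ← mul_assoc _ c, slide, mul_assoc c,
    ← mul_assoc b, h.alpha_mul_delta, smul_neg, ← neg_smul,
    (h.delta_alpha_qCommute_bc.smul_left _).self_mul_add_pow_mul_add_pow
      (h.delta_alpha_qCommute_bc.smul_left _) (vanish _ _) (vanish _ _) (vanish _ _)]
  simp only [mul_add, mul_smul_comm]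
  module

theorem odd_pow_entries (h : GrassmannRelations s t α b c δ) (m : ℕ) :
    GrassmannRelations (s ^ (2 * m + 1)) (t ^ (2 * m + 1))
      (grassmannDiagEntry s t α b c δ m) (grassmannOffDiagEntry s α b c δ m)
      (grassmannOffDiagEntry t δ c b α m) (grassmannDiagEntry t s δ c b α m) where
  alpha_b := h.diagEntry_qCommute_offDiagEntry m
  alpha_c := h.diagEntry_qCommute_offDiagEntry_swap m
  delta_b := h.swap.diagEntry_qCommute_offDiagEntry_swap m
  delta_c := h.swap.diagEntry_qCommute_offDiagEntry m
  alpha_delta := by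
    rw [h.diagEntry_swap_mul_diagEntry, h.swap.diagEntry_swap_mul_diagEntry, mul_comm t s,
      mul_comm (s ^ _), mul_comm (t ^ _), mul_smul, mul_smul,
      h.smul_bc_pow_mul h.delta_alpha_mul_self, ← smul_add, ← smul_add, ← mul_add, h.alpha_delta,
      mul_zero, smul_zero, smul_zero]
  alpha_sq := h.diagEntry_sq m
  delta_sq := h.swap.diagEntry_sq m
  b_c := by
    have exchange := h.smul_bc_pow_mul h.delta_alpha_mul_self (2 * m)
    have scalar := one_sub_pow_mul_qNumber_sq_sub (s * t) m
    rw [h.offDiagEntry_mul_offDiagEntry_swap, h.swap.offDiagEntry_mul_offDiagEntry_swap,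
      h.diagEntry_swap_mul_diagEntry, h.alpha_mul_delta, ← mul_pow, mul_comm t s, mul_neg]
    set k := qNumber ((s * t) ^ 2) m
    set d := qNumber (s * t) (m + 1) ^ 2 - s * t * qNumber (s * t) m ^ 2
    linear_combination (norm := module) h.smul_bc_pow_succ (2 * m) +
      ((1 - (s * t) ^ (2 * m + 1)) * (s * t * k - d)) • exchange -
      scalar • (t ^ (2 * m) • ((c * b) ^ (2 * m) * (δ * α)))

end GrassmannRelations

theorem grassmannRelations_inv_iff {K A : Type*} [Field K] [Ring A] [Algebra K A] {p q : K}
    (hp : p ≠ 0) {α b c δ : A} :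
    GrassmannRelations p⁻¹ q⁻¹ α b c δ ↔
      α * b = p⁻¹ • (b * α) ∧ α * c = q⁻¹ • (c * α) ∧
        δ * b = p⁻¹ • (b * δ) ∧ δ * c = q⁻¹ • (c * δ) ∧
        α * δ + δ * α = 0 ∧ α ^ 2 = 0 ∧ δ ^ 2 = 0 ∧
        b * c = (p * q⁻¹) • (c * b) + (p - q⁻¹) • (δ * α) := by
  have clear_denominator : p⁻¹ • (b * c) = q⁻¹ • (c * b) + (1 - p⁻¹ * q⁻¹) • (δ * α) ↔
      b * c = (p * q⁻¹) • (c * b) + (p - q⁻¹) • (δ * α) := by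
    rw [inv_smul_eq_iff₀ hp, smul_add, smul_smul, smul_smul, mul_sub, mul_one,
      mul_inv_cancel_left₀ hp]
  rw [← clear_denominator]
  exact ⟨fun h => ⟨h.alpha_b, h.alpha_c, h.delta_b, h.delta_c, h.alpha_delta, h.alpha_sq,
      h.delta_sq, h.b_c⟩,
    fun ⟨αb, αc, δb, δc, αδ, α_sq, δ_sq, bc⟩ => ⟨αb, αc, δb, δc, αδ, α_sq, δ_sq, bc⟩⟩

theorem grassmann_super_odd_power_relations_general {R A : Type*} [CommRing R] [Ring A]
    [Algebra R A] {s t : R} {M : Matrix (Fin 2) (Fin 2) A}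
    (h : GrassmannRelations s t (M 0 0) (M 0 1) (M 1 0) (M 1 1)) (m : ℕ) :
    GrassmannRelations (s ^ (2 * m + 1)) (t ^ (2 * m + 1))
      ((M ^ (2 * m + 1)) 0 0) ((M ^ (2 * m + 1)) 0 1)
      ((M ^ (2 * m + 1)) 1 0) ((M ^ (2 * m + 1)) 1 1) := by
  have closed_form := h.matrix_odd_pow m
  rw [← Matrix.eta_fin_two] at closed_form
  rw [closed_form]
  exact h.odd_pow_entries m

/-- Under the Gr_{p,q}(1|1) relations, the entries of Â^{2n−1} satisfy the
Gr_{P,Q}(1|1) relations with P = p^{2n−1} and Q = q^{2n−1}. -/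
theorem grassmann_super_odd_power_relations
    (A : Type*) [Ring A] [Algebra ℂ A] (p q : ℂ) (hp : p ≠ 0) (hq : q ≠ 0)
    (α b c δ : A)
    (hαb : α * b = p⁻¹ • (b * α)) (hαc : α * c = q⁻¹ • (c * α))
    (hδb : δ * b = p⁻¹ • (b * δ)) (hδc : δ * c = q⁻¹ • (c * δ))
    (hαδ : α * δ + δ * α = 0) (hα2 : α ^ 2 = 0) (hδ2 : δ ^ 2 = 0)
    (hbc : b * c = (p * q⁻¹) • (c * b) + (p - q⁻¹) • (δ * α))
    (n : ℕ) (hn : 1 ≤ n)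
    (A₀ B₀ C₀ D₀ : A)
    (hA₀ : A₀ = ((!![α, b; c, δ] : Matrix (Fin 2) (Fin 2) A) ^ (2 * n - 1)) 0 0)
    (hB₀ : B₀ = ((!![α, b; c, δ] : Matrix (Fin 2) (Fin 2) A) ^ (2 * n - 1)) 0 1)
    (hC₀ : C₀ = ((!![α, b; c, δ] : Matrix (Fin 2) (Fin 2) A) ^ (2 * n - 1)) 1 0)
    (hD₀ : D₀ = ((!![α, b; c, δ] : Matrix (Fin 2) (Fin 2) A) ^ (2 * n - 1)) 1 1) :
    A₀ * B₀ = (p ^ (2 * n - 1))⁻¹ • (B₀ * A₀) ∧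
      A₀ * C₀ = (q ^ (2 * n - 1))⁻¹ • (C₀ * A₀) ∧
      D₀ * B₀ = (p ^ (2 * n - 1))⁻¹ • (B₀ * D₀) ∧
      D₀ * C₀ = (q ^ (2 * n - 1))⁻¹ • (C₀ * D₀) ∧
      A₀ * D₀ + D₀ * A₀ = 0 ∧ A₀ ^ 2 = 0 ∧ D₀ ^ 2 = 0 ∧
      B₀ * C₀ = (p ^ (2 * n - 1) * (q ^ (2 * n - 1))⁻¹) • (C₀ * B₀) +
        (p ^ (2 * n - 1) - (q ^ (2 * n - 1))⁻¹) • (D₀ * A₀) := by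
  obtain ⟨m, rfl⟩ := Nat.exists_eq_add_of_le' hn
  have relations : GrassmannRelations p⁻¹ q⁻¹ α b c δ :=
    (grassmannRelations_inv_iff hp).2 ⟨hαb, hαc, hδb, hδc, hαδ, hα2, hδ2, hbc⟩
  have power := grassmann_super_odd_power_relations_general (M := !![α, b; c, δ]) relations m
  rw [inv_pow, inv_pow, grassmannRelations_inv_iff (pow_ne_zero _ hp)] at power
  rwa [hA₀, hB₀, hC₀, hD₀, show 2 * (m + 1) - 1 = 2 * m + 1 by omega]
end

section
/- Under the Gr_{p,q}(1|1) relations, assuming moreover pq ≠ 1 and pq ≠ −1, for every integer n ≥ 1 the (2n)-th matrix power of Â is given explicitly by: Â^{2n} has (1,1)-entry (bc + p ((1 − pq)/(1 + pq)) ⟨n⟩_{pq} ⟨n−1⟩_{pq} αδ)(bc)^{n−1}, (1,2)-entry ⟨n⟩_{pq} (α + pδ)(bc)^{n−1} b, (2,1)-entry ⟨n⟩_{pq} (δ + qα)(cb)^{n−1} c, and (2,2)-entry (cb + q ((1 − pq)/(1 + pq)) ⟨n⟩_{pq} ⟨n−1⟩_{pq} δα)(cb)^{n−1}. -/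
/-- The q-bracket ⟨N⟩_t = 1 + t + ⋯ + t^{N-1}. -/
noncomputable def qBracket (t : ℂ) (N : ℕ) : ℂ := ∑ k ∈ Finset.range N, t ^ k

/-!
Write `t = pq`, `u = α + pδ` and `v = δ + qα`. The square of `Â` is `N + D`, where `D` is diagonal
with entries `bc`, `cb` and `N` is antidiagonal with entries `ub`, `vc`. These parts satisfy
`D N = t N D`, so the noncommutative `t`-binomial theorem expands `(N + D)ⁿ` as the sum of the
`[n choose i]_t Nⁱ Dⁿ⁻ⁱ`. As `α` and `δ` anticommute and square to zero, `N³ = 0`: only the terms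
with `i ≤ 2` survive. Finally `(1 + t) [n choose 2]_t = ⟨n⟩_t ⟨n - 1⟩_t`.
-/

open Finset

section QBinomial

variable {R : Type*} [CommSemiring R] (t : R)

/-- The Gaussian binomial coefficient `[n choose k]_t`, given by the Pascal rule that arises when
`(x + y) ^ n` is multiplied by `x + y` on the left and `y * x = t • (x * y)`. No division is
involved, so `t` may be a root of unity. -/
def qChoose : ℕ → ℕ → R
  | _, 0 => 1
  | 0, _ + 1 => 0
  | n + 1, k + 1 => qChoose n k + t ^ (k + 1) * qChoose n (k + 1)

@[simp]
lemma qChoose_zero_right (n : ℕ) : qChoose t n 0 = 1 := by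
  cases n <;> rfl

lemma qChoose_succ_succ (n k : ℕ) :
    qChoose t (n + 1) (k + 1) = qChoose t n k + t ^ (k + 1) * qChoose t n (k + 1) :=
  rfl

lemma qChoose_eq_zero_of_lt {n k : ℕ} (h : n < k) : qChoose t n k = 0 := by
  induction n generalizing k with
  | zero => obtain ⟨k, rfl⟩ := Nat.exists_eq_add_of_lt h; rfl
  | succ n ih =>
    obtain ⟨k, rfl⟩ := Nat.exists_eq_add_of_lt (Nat.zero_lt_of_lt h)
    rw [qChoose_succ_succ, ih (by omega), ih (by omega), mul_zero, add_zero]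

lemma qChoose_one_right (n : ℕ) : qChoose t n 1 = ∑ k ∈ range n, t ^ k := by
  induction n with
  | zero => rfl
  | succ n ih => rw [qChoose_succ_succ, ih, geom_sum_succ, qChoose_zero_right, pow_one, add_comm]

lemma one_add_mul_qChoose_two (n : ℕ) :
    (1 + t) * qChoose t (n + 1) 2 = (∑ k ∈ range (n + 1), t ^ k) * ∑ k ∈ range n, t ^ k := by
  induction n with
  | zero => simp [qChoose]
  | succ n ih =>
    calc (1 + t) * qChoose t (n + 2) 2
        = (1 + t) * (∑ k ∈ range (n + 1), t ^ k) + t ^ 2 * ((1 + t) * qChoose t (n + 1) 2) := by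
          rw [qChoose_succ_succ, qChoose_one_right]; ring
      _ = (∑ k ∈ range (n + 2), t ^ k) * ∑ k ∈ range (n + 1), t ^ k := by
          rw [ih, geom_sum_succ (n := n + 1), geom_sum_succ (n := n)]; ring

variable {t} {A : Type*} [Semiring A] [Algebra R A] {x y : A}

lemma mul_pow_of_mul_eq_smul_mul (h : y * x = t • (x * y)) (n : ℕ) :
    y * x ^ n = t ^ n • (x ^ n * y) := by
  induction n with
  | zero => simp
  | succ n ih =>
    rw [pow_succ, ← mul_assoc, ih, smul_mul_assoc, mul_assoc, h, mul_smul_comm, smul_smul,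
      ← mul_assoc, ← pow_succ]

theorem add_pow_of_mul_eq_smul_mul (h : y * x = t • (x * y)) (n : ℕ) :
    (x + y) ^ n = ∑ ij ∈ antidiagonal n, qChoose t n ij.1 • (x ^ ij.1 * y ^ ij.2) := by
  induction n with
  | zero => simp
  | succ n ih =>
    have x_mul_pow : x * (x + y) ^ n =
        ∑ ij ∈ antidiagonal n, qChoose t n ij.1 • (x ^ (ij.1 + 1) * y ^ ij.2) := by
      simp only [ih, mul_sum, mul_smul_comm, pow_succ', mul_assoc]
    have y_mul_pow : y * (x + y) ^ n =
        ∑ ij ∈ antidiagonal (n + 1), (t ^ ij.1 * qChoose t n ij.1) • (x ^ ij.1 * y ^ ij.2) := by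
      rw [Nat.sum_antidiagonal_succ', qChoose_eq_zero_of_lt t n.lt_succ_self, mul_zero, zero_smul,
        zero_add, ih, mul_sum]
      refine sum_congr rfl fun ij _ ↦ ?_
      rw [mul_smul_comm, ← mul_assoc, mul_pow_of_mul_eq_smul_mul h, smul_mul_assoc, smul_smul,
        mul_assoc, ← pow_succ', mul_comm]
    rw [pow_succ', add_mul, x_mul_pow, y_mul_pow, Nat.sum_antidiagonal_succ,
      Nat.sum_antidiagonal_succ]
    simp only [qChoose_succ_succ, qChoose_zero_right, add_smul, sum_add_distrib, pow_zero, mul_one]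
    exact add_left_comm _ _ _

lemma add_pow_add_two_of_pow_three_eq_zero (h : y * x = t • (x * y)) (hx : x ^ 3 = 0) (n : ℕ) :
    (x + y) ^ (n + 2) = y ^ (n + 2) + (∑ k ∈ range (n + 2), t ^ k) • (x * y ^ (n + 1)) +
      qChoose t (n + 2) 2 • (x ^ 2 * y ^ n) := by
  have x_pow (k : ℕ) : x ^ (k + 1 + 1 + 1) = 0 := pow_eq_zero_of_le (Nat.le_add_left 3 k) hx
  rw [add_pow_of_mul_eq_smul_mul h, ← qChoose_one_right]
  cases n <;> simp [Nat.sum_antidiagonal_succ, x_pow, add_assoc]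

lemma add_pow_succ_of_mul_self_eq_mul {e : A} (h : y * x = t • (x * y)) (hxx : x * x = e * y)
    (hex : e * x = 0) (n : ℕ) :
    (x + y) ^ (n + 1) = (y + qChoose t (n + 1) 2 • e) * y ^ n +
      (∑ k ∈ range (n + 1), t ^ k) • (x * y ^ n) := by
  have hx : x ^ 3 = 0 := by
    rw [pow_three', hxx, mul_assoc, h, mul_smul_comm, ← mul_assoc, hex, zero_mul, smul_zero]
  cases n with
  | zero => simp [qChoose, add_comm]
  | succ n =>
    rw [add_pow_add_two_of_pow_three_eq_zero h hx, pow_two, hxx, mul_assoc, ← pow_succ', add_mul,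
      smul_mul_assoc, ← pow_succ', add_right_comm]

lemma matrix_fin_two_pow_succ {β γ ε ζ : A} (hxβ : x * β = t • (β * y))
    (hyγ : y * γ = t • (γ * x)) (hβγ : β * γ = ε * x) (hγβ : γ * β = ζ * y) (hεβ : ε * β = 0)
    (hζγ : ζ * γ = 0) (n : ℕ) :
    !![x, β; γ, y] ^ (n + 1) =
      !![(x + qChoose t (n + 1) 2 • ε) * x ^ n, (∑ k ∈ range (n + 1), t ^ k) • (β * y ^ n);
        (∑ k ∈ range (n + 1), t ^ k) • (γ * x ^ n), (y + qChoose t (n + 1) 2 • ζ) * y ^ n] := by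
  have diag_pow : !![x, 0; 0, y] ^ n = !![x ^ n, 0; 0, y ^ n] := by
    simpa [Matrix.diagonal_fin_two, funext_iff, Fin.forall_fin_two] using
      Matrix.diagonal_pow ![x, y] n
  have key := add_pow_succ_of_mul_self_eq_mul (t := t) (x := !![0, β; γ, 0]) (y := !![x, 0; 0, y])
    (e := !![ε, 0; 0, ζ]) (by simp [hxβ, hyγ]) (by simp [hβγ, hγβ])
    (by simp [hεβ, hζγ, ← Matrix.ext_iff, Fin.forall_fin_two]) n
  simpa [diag_pow] using key

end QBinomial

lemma mul_add_smul_eq_smul_mul {R A : Type*} [CommSemiring R] [Semiring A] [Algebra R A] {p : R}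
    {x y z : A} (hy : p • (y * x) = x * y) (hz : p • (z * x) = x * z) (r : R) :
    x * (y + r • z) = p • ((y + r • z) * x) := by
  rw [mul_add, mul_smul_comm, add_mul, smul_mul_assoc, ← hy, ← hz, smul_add, smul_comm r p]

/-- The relations of `Gr_{p,q}(1|1)` other than the one exchanging `b` and `c`, with the inverses of
`p` and `q` cleared so that these may be arbitrary scalars. -/
structure IsGrassmannSuper {R A : Type*} [CommRing R] [Ring A] [Algebra R A] (p q : R)
    (α b c δ : A) : Prop where
  smul_α_mul_b : p • (α * b) = b * α
  smul_α_mul_c : q • (α * c) = c * α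
  smul_δ_mul_b : p • (δ * b) = b * δ
  smul_δ_mul_c : q • (δ * c) = c * δ
  α_mul_δ_add_δ_mul_α : α * δ + δ * α = 0
  α_sq : α ^ 2 = 0
  δ_sq : δ ^ 2 = 0

namespace IsGrassmannSuper

variable {R A : Type*} [CommRing R] [Ring A] [Algebra R A] {p q : R} {α b c δ : A}

lemma swap (h : IsGrassmannSuper p q α b c δ) : IsGrassmannSuper q p δ c b α where
  smul_α_mul_b := h.smul_δ_mul_c
  smul_α_mul_c := h.smul_δ_mul_b
  smul_δ_mul_b := h.smul_α_mul_c
  smul_δ_mul_c := h.smul_α_mul_b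
  α_mul_δ_add_δ_mul_α := (add_comm _ _).trans h.α_mul_δ_add_δ_mul_α
  α_sq := h.δ_sq
  δ_sq := h.α_sq

lemma α_mul_α (h : IsGrassmannSuper p q α b c δ) : α * α = 0 :=
  (pow_two α).symm.trans h.α_sq

lemma δ_mul_α (h : IsGrassmannSuper p q α b c δ) : δ * α = -(α * δ) :=
  eq_neg_of_add_eq_zero_right h.α_mul_δ_add_δ_mul_α

lemma b_mul_α_add_smul_δ (h : IsGrassmannSuper p q α b c δ) (r : R) :
    b * (α + r • δ) = p • ((α + r • δ) * b) :=
  mul_add_smul_eq_smul_mul h.smul_α_mul_b h.smul_δ_mul_b r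

lemma b_mul_δ_add_smul_α (h : IsGrassmannSuper p q α b c δ) (r : R) :
    b * (δ + r • α) = p • ((δ + r • α) * b) :=
  mul_add_smul_eq_smul_mul h.smul_δ_mul_b h.smul_α_mul_b r

lemma α_add_mul_δ_add (h : IsGrassmannSuper p q α b c δ) :
    (α + p • δ) * (δ + q • α) = (1 - p * q) • (α * δ) := by
  simp only [mul_add, add_mul, mul_smul_comm, smul_mul_assoc, h.δ_mul_α, h.α_mul_α, h.swap.α_mul_α]
  module

lemma α_mul_δ_mul_α_add_smul_δ (h : IsGrassmannSuper p q α b c δ) (r : R) :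
    α * δ * (α + r • δ) = 0 := by
  have αδα : α * δ * α = 0 := by
    rw [mul_assoc, h.δ_mul_α, mul_neg, ← mul_assoc, h.α_mul_α, zero_mul, neg_zero]
  rw [mul_add, αδα, mul_smul_comm, mul_assoc, h.swap.α_mul_α, mul_zero, smul_zero, add_zero]

lemma matrix_sq (h : IsGrassmannSuper p q α b c δ) :
    !![α, b; c, δ] ^ 2 = !![b * c, (α + p • δ) * b; (δ + q • α) * c, c * b] := by
  rw [pow_two, Matrix.mul_fin_two, h.α_mul_α, h.swap.α_mul_α, ← h.smul_δ_mul_b, ← h.smul_α_mul_c]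
  simp only [add_mul, smul_mul_assoc, zero_add, add_zero, add_comm (δ * c)]

lemma b_mul_c_mul_offDiag (h : IsGrassmannSuper p q α b c δ) :
    b * c * ((α + p • δ) * b) = (p * q) • ((α + p • δ) * b * (c * b)) := by
  calc b * c * ((α + p • δ) * b) = b * (c * (α + p • δ)) * b := by simp only [mul_assoc]
    _ = q • (b * (α + p • δ) * c * b) := by
      rw [h.swap.b_mul_δ_add_smul_α]
      simp only [mul_smul_comm, smul_mul_assoc, mul_assoc]
    _ = (p * q) • ((α + p • δ) * b * (c * b)) := by
      rw [h.b_mul_α_add_smul_δ, mul_comm p q, mul_smul]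
      simp only [smul_mul_assoc, mul_assoc]

lemma offDiag_mul_offDiag (h : IsGrassmannSuper p q α b c δ) :
    (α + p • δ) * b * ((δ + q • α) * c) = (p * (1 - p * q)) • (α * δ) * (b * c) := by
  calc (α + p • δ) * b * ((δ + q • α) * c) = (α + p • δ) * (b * (δ + q • α)) * c := by
        simp only [mul_assoc]
    _ = p • ((α + p • δ) * (δ + q • α) * (b * c)) := by
      rw [h.b_mul_δ_add_smul_α]
      simp only [mul_smul_comm, smul_mul_assoc, mul_assoc]
    _ = (p * (1 - p * q)) • (α * δ) * (b * c) := by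
      rw [h.α_add_mul_δ_add, mul_smul, smul_mul_assoc p]

lemma α_mul_δ_mul_offDiag (h : IsGrassmannSuper p q α b c δ) (r : R) :
    r • (α * δ) * ((α + p • δ) * b) = 0 := by
  rw [smul_mul_assoc, ← mul_assoc, h.α_mul_δ_mul_α_add_smul_δ, zero_mul, smul_zero]

end IsGrassmannSuper

lemma mul_div_one_add_mul_qBracket {t : ℂ} (ht : 1 + t ≠ 0) (r : ℂ) (n : ℕ) :
    r * ((1 - t) / (1 + t)) * qBracket t (n + 1) * qBracket t n =
      r * (1 - t) * qChoose t (n + 1) 2 := by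
  have h : (1 + t) * qChoose t (n + 1) 2 = qBracket t (n + 1) * qBracket t n :=
    one_add_mul_qChoose_two t n
  rw [mul_assoc, ← h]
  field_simp

theorem grassmann_super_even_power_entries_general {R A : Type*} [CommRing R] [Ring A] [Algebra R A]
    {p q : R} {α b c δ : A} (h : IsGrassmannSuper p q α b c δ) (n : ℕ) :
    !![α, b; c, δ] ^ (2 * (n + 1)) =
      !![(b * c + (p * (1 - p * q) * qChoose (p * q) (n + 1) 2) • (α * δ)) * (b * c) ^ n,
        (∑ k ∈ range (n + 1), (p * q) ^ k) • ((α + p • δ) * (b * c) ^ n * b);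
        (∑ k ∈ range (n + 1), (p * q) ^ k) • ((δ + q • α) * (c * b) ^ n * c),
        (c * b + (q * (1 - p * q) * qChoose (p * q) (n + 1) 2) • (δ * α)) * (c * b) ^ n] := by
  have cb_mul_lower := h.swap.b_mul_c_mul_offDiag
  have lower_mul_upper := h.swap.offDiag_mul_offDiag
  rw [mul_comm q p] at cb_mul_lower lower_mul_upper
  rw [pow_mul, h.matrix_sq, matrix_fin_two_pow_succ h.b_mul_c_mul_offDiag cb_mul_lower
    h.offDiag_mul_offDiag lower_mul_upper (h.α_mul_δ_mul_offDiag _) (h.swap.α_mul_δ_mul_offDiag _)]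
  simp only [smul_smul, mul_assoc (_ + _), mul_pow_mul, mul_comm (qChoose _ _ _)]

/-- Under the Gr_{p,q}(1|1) relations, with pq ≠ ±1, the explicit formulas for the
entries of the even power Â^{2n}, for n ≥ 1. -/
theorem grassmann_super_even_power_entries
    (A : Type*) [Ring A] [Algebra ℂ A] (p q : ℂ) (hp : p ≠ 0) (hq : q ≠ 0)
    (α b c δ : A)
    (hαb : α * b = p⁻¹ • (b * α)) (hαc : α * c = q⁻¹ • (c * α))
    (hδb : δ * b = p⁻¹ • (b * δ)) (hδc : δ * c = q⁻¹ • (c * δ))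
    (hαδ : α * δ + δ * α = 0) (hα2 : α ^ 2 = 0) (hδ2 : δ ^ 2 = 0)
    (hbc : b * c = (p * q⁻¹) • (c * b) + (p - q⁻¹) • (δ * α))
    (hpq1 : p * q ≠ 1) (hpq1' : p * q ≠ -1)
    (n : ℕ) (hn : 1 ≤ n) :
    ((!![α, b; c, δ] : Matrix (Fin 2) (Fin 2) A) ^ (2 * n)) 0 0 =
        (b * c + (p * ((1 - p * q) / (1 + p * q)) * qBracket (p * q) n *
          qBracket (p * q) (n - 1)) • (α * δ)) * (b * c) ^ (n - 1) ∧
      ((!![α, b; c, δ] : Matrix (Fin 2) (Fin 2) A) ^ (2 * n)) 0 1 =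
        qBracket (p * q) n • ((α + p • δ) * (b * c) ^ (n - 1) * b) ∧
      ((!![α, b; c, δ] : Matrix (Fin 2) (Fin 2) A) ^ (2 * n)) 1 0 =
        qBracket (p * q) n • ((δ + q • α) * (c * b) ^ (n - 1) * c) ∧
      ((!![α, b; c, δ] : Matrix (Fin 2) (Fin 2) A) ^ (2 * n)) 1 1 =
        (c * b + (q * ((1 - p * q) / (1 + p * q)) * qBracket (p * q) n *
          qBracket (p * q) (n - 1)) • (δ * α)) * (c * b) ^ (n - 1) := by
  have ht : 1 + p * q ≠ 0 := fun h ↦ hpq1' (eq_neg_of_add_eq_zero_right h)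
  have h : IsGrassmannSuper p q α b c δ :=
    ⟨(eq_inv_smul_iff₀ hp).1 hαb, (eq_inv_smul_iff₀ hq).1 hαc, (eq_inv_smul_iff₀ hp).1 hδb,
      (eq_inv_smul_iff₀ hq).1 hδc, hαδ, hα2, hδ2⟩
  obtain ⟨m, rfl⟩ := Nat.exists_eq_add_of_le' hn
  rw [Nat.add_sub_cancel, mul_div_one_add_mul_qBracket ht, mul_div_one_add_mul_qBracket ht,
    grassmann_super_even_power_entries_general h]
  exact ⟨rfl, rfl, rfl, rfl⟩
end

section
/- Under the Gr_{p,q}(1|1) relations, for every integer n ≥ 1, writing A, B, C, D for the (1,1)-, (1,2)-, (2,1)-, (2,2)-entries of the matrix power Â^{2n}, these entries satisfy: AB = q^{2n} BA, AC = p^{2n} CA, DB = q^{2n} BD, DC = p^{2n} CD, BC + p^{2n} q^{−2n} CB = 0, B² = 0 = C², and AD − DA = (p^{2n} − q^{−2n}) CB; in particular Â^{2n} has the commutation pattern of a quantum supermatrix with even diagonal and odd off-diagonal entries, with deformation parameters built from p^{2n} and q^{2n}. -/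
/-!
Two powers `X = M ^ m` and `Y = M ^ n` of a quantum supermatrix `M` with even diagonal and odd
off-diagonal satisfy mixed relations, the key one being
`X₀₀ Y₁₁ - Y₁₁ X₀₀ = p ^ m Y₁₀ X₀₁ - q ^ (-m) X₁₀ Y₀₁`. Unlike the relations of a single matrix,
the mixed ones are stable under multiplying either factor by a further matrix of the family,
because the family is commutative: comparing the `(0, 1)` and `(1, 0)` entries of `Z Y = Y Z` and
`Z X = X Z` produces exactly the missing terms. So `M ^ n` is again a quantum supermatrix, with
parameters `p ^ n` and `q ^ n`.

The square of `(α, b; c, δ)` has diagonal `bc`, `cb` and off-diagonal `b θ`, `c η`, where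
`θ = p⁻¹ α + δ` and `η = q⁻¹ δ + α` are square-zero, anticommute, and skew-commute with `b` and `c`.
Hence it is a quantum supermatrix with parameters `p ^ 2` and `q ^ 2`, and its powers are the even
powers of the original matrix.
-/

section SkewCommute

variable {R A : Type*} [CommSemiring R] [Semiring A] [Algebra R A]

/-- `k`-commutation of two elements, the twisted analogue of `Commute`. The scalar is a unit so that
the relation can be reversed, with `k⁻¹` in place of `k`. -/
def SkewCommute (k : Rˣ) (x y : A) : Prop :=
  x * y = k • (y * x)

namespace SkewCommute

variable {k l : Rˣ} {x y z : A}

theorem symm (h : SkewCommute k x y) : SkewCommute k⁻¹ y x := by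
  rw [SkewCommute, eq_inv_smul_iff, ← h]

theorem of_mul_eq_zero (hxy : x * y = 0) (hyx : y * x = 0) (k : Rˣ) : SkewCommute k x y := by
  rw [SkewCommute, hxy, hyx, smul_zero]

theorem add_left (hx : SkewCommute k x z) (hy : SkewCommute k y z) :
    SkewCommute k (x + y) z := by
  rw [SkewCommute, add_mul, mul_add, smul_add, hx, hy]

protected theorem eq (h : SkewCommute k x y) : x * y = k • (y * x) := h

theorem smul_left (h : SkewCommute k x y) (l : Rˣ) : SkewCommute k (l • x) y := by
  rw [SkewCommute, smul_mul_assoc, mul_smul_comm, h, smul_comm]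

theorem mul_left (hx : SkewCommute k x z) (hy : SkewCommute l y z) :
    SkewCommute (k * l) (x * y) z := by
  rw [SkewCommute, mul_assoc, hy, mul_smul_comm, ← mul_assoc, hx, smul_mul_assoc, smul_smul,
    mul_comm l, mul_assoc]

theorem mul_right (hy : SkewCommute k x y) (hz : SkewCommute l x z) :
    SkewCommute (k * l) x (y * z) := by
  rw [SkewCommute, ← mul_assoc, hy, smul_mul_assoc, mul_assoc, hz, mul_smul_comm, smul_smul,
    mul_assoc]

theorem add_right (hy : SkewCommute k x y) (hz : SkewCommute k x z) :
    SkewCommute k x (y + z) := by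
  rw [SkewCommute, mul_add, add_mul, smul_add, hy, hz]

theorem mul_mul_eq_zero (h : SkewCommute k x y) (hxz : x * z = 0) : x * (y * z) = 0 := by
  rw [← mul_assoc, h, smul_mul_assoc, mul_assoc, hxz, mul_zero, smul_zero]

end SkewCommute

end SkewCommute

section ParitySwap

/-- Conjugation by the permutation of the two indices. It exchanges the roles of the parameters `p`
and `q`, so that each relation involving lower entries follows from one involving upper entries. -/
def paritySwap {A : Type*} (X : Matrix (Fin 2) (Fin 2) A) : Matrix (Fin 2) (Fin 2) A :=
  X.submatrix Fin.rev Fin.rev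

variable {A : Type*} [NonUnitalNonAssocSemiring A]

theorem paritySwap_mul (X Y : Matrix (Fin 2) (Fin 2) A) :
    paritySwap (X * Y) = paritySwap X * paritySwap Y :=
  (Matrix.submatrix_mul_equiv X Y Fin.rev Fin.revPerm Fin.rev).symm

theorem commute_paritySwap {X Y : Matrix (Fin 2) (Fin 2) A} (h : Commute X Y) :
    Commute (paritySwap X) (paritySwap Y) := by
  rw [Commute, SemiconjBy, ← paritySwap_mul, h.eq, paritySwap_mul]

theorem fin_two_mul_apply (X Y : Matrix (Fin 2) (Fin 2) A) (i j : Fin 2) :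
    (X * Y) i j = X i 0 * Y 0 j + X i 1 * Y 1 j := by
  rw [Matrix.mul_apply, Fin.sum_univ_two]

theorem paritySwap_sq {A : Type*} [Semiring A] (M : Matrix (Fin 2) (Fin 2) A) :
    paritySwap (M ^ 2) = paritySwap M ^ 2 := by
  rw [pow_two, pow_two, paritySwap_mul]

end ParitySwap

section Supermatrix

variable {R A : Type*} [CommRing R] [Ring A] [Algebra R A]

/-- The relations between a matrix `X` with parameters `p, q` and a matrix `Y` with parameters
`p', q'` from a commuting family of quantum supermatrices (even diagonal, odd off-diagonal), such as
two powers of one supermatrix. The `rev` and `lower_upper` relations keep the list closed under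
`paritySwap`. -/
structure QuantumSuperRel (p q p' q' : Rˣ) (X Y : Matrix (Fin 2) (Fin 2) A) : Prop where
  diag_upper (i : Fin 2) : SkewCommute q (X i i) (Y 0 1)
  diag_lower (i : Fin 2) : SkewCommute p (X i i) (Y 1 0)
  upper_lower : SkewCommute (-(p * q'⁻¹)) (X 0 1) (Y 1 0)
  lower_upper : SkewCommute (-(q * p'⁻¹)) (X 1 0) (Y 0 1)
  upper_mul_upper : X 0 1 * Y 0 1 = 0
  lower_mul_lower : X 1 0 * Y 1 0 = 0
  comm_diag : X 0 0 * Y 1 1 - Y 1 1 * X 0 0 = p • (Y 1 0 * X 0 1) - q⁻¹ • (X 1 0 * Y 0 1)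
  comm_diag_rev : X 1 1 * Y 0 0 - Y 0 0 * X 1 1 = q • (Y 0 1 * X 1 0) - p⁻¹ • (X 0 1 * Y 1 0)

namespace QuantumSuperRel

variable {p q p₁ q₁ p₂ q₂ : Rˣ} {X Y Z : Matrix (Fin 2) (Fin 2) A} {u : A}

theorem swap (h : QuantumSuperRel p q p₁ q₁ X Y) :
    QuantumSuperRel q p q₁ p₁ (paritySwap X) (paritySwap Y) where
  diag_upper i := h.diag_lower i.rev
  diag_lower i := h.diag_upper i.rev
  upper_lower := h.lower_upper
  lower_upper := h.upper_lower
  upper_mul_upper := h.lower_mul_lower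
  lower_mul_lower := h.upper_mul_upper
  comm_diag := h.comm_diag_rev
  comm_diag_rev := h.comm_diag

theorem diag_mul_diag_mul_right (h : QuantumSuperRel p q p₁ q₁ X Y) (hXY : Commute X Y)
    (hX : X 0 1 * u = 0) (hY : Y 0 1 * u = 0) (i j : Fin 2) :
    X i i * Y j j * u = Y j j * X i i * u := by
  have hY₁₀X₀₁ : Y 1 0 * X 0 1 * u = 0 := by rw [mul_assoc, hX, mul_zero]
  have hX₁₀Y₀₁ : X 1 0 * Y 0 1 * u = 0 := by rw [mul_assoc, hY, mul_zero]
  have hX₀₁Y₁₀ : X 0 1 * Y 1 0 * u = 0 := by rw [h.upper_lower, smul_mul_assoc, hY₁₀X₀₁, smul_zero]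
  have hY₀₁X₁₀ : Y 0 1 * X 1 0 * u = 0 := by
    rw [h.lower_upper.symm, smul_mul_assoc, hX₁₀Y₀₁, smul_zero]
  match i, j with
  | 0, 0 => simpa [fin_two_mul_apply, add_mul, hX₀₁Y₁₀, hY₀₁X₁₀] using congr($hXY.eq 0 0 * u)
  | 0, 1 =>
    simpa [sub_mul, smul_mul_assoc, hY₁₀X₀₁, hX₁₀Y₀₁, sub_eq_zero] using congr($h.comm_diag * u)
  | 1, 0 =>
    simpa [sub_mul, smul_mul_assoc, hY₀₁X₁₀, hX₀₁Y₁₀, sub_eq_zero] using congr($h.comm_diag_rev * u)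
  | 1, 1 => simpa [fin_two_mul_apply, add_mul, hX₁₀Y₀₁, hY₁₀X₀₁] using congr($hXY.eq 1 1 * u)

theorem diag_mul_diag_mul_left (h : QuantumSuperRel p q p₁ q₁ X Y) (hXY : Commute X Y)
    (hX : u * X 0 1 = 0) (hY : u * Y 0 1 = 0) (i j : Fin 2) :
    u * (X i i * Y j j) = u * (Y j j * X i i) := by
  have hY₀₁X₁₀ : u * (Y 0 1 * X 1 0) = 0 := by rw [← mul_assoc, hY, zero_mul]
  have hX₀₁Y₁₀ : u * (X 0 1 * Y 1 0) = 0 := by rw [← mul_assoc, hX, zero_mul]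
  have hX₁₀Y₀₁ : u * (X 1 0 * Y 0 1) = 0 := by rw [h.lower_upper, mul_smul_comm, hY₀₁X₁₀, smul_zero]
  have hY₁₀X₀₁ : u * (Y 1 0 * X 0 1) = 0 := by
    rw [h.upper_lower.symm, mul_smul_comm, hX₀₁Y₁₀, smul_zero]
  match i, j with
  | 0, 0 => simpa [fin_two_mul_apply, mul_add, hX₀₁Y₁₀, hY₀₁X₁₀] using congr(u * $hXY.eq 0 0)
  | 0, 1 =>
    simpa [mul_sub, mul_smul_comm, hY₁₀X₀₁, hX₁₀Y₀₁, sub_eq_zero] using congr(u * $h.comm_diag)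
  | 1, 0 =>
    simpa [mul_sub, mul_smul_comm, hY₀₁X₁₀, hX₀₁Y₁₀, sub_eq_zero] using congr(u * $h.comm_diag_rev)
  | 1, 1 => simpa [fin_two_mul_apply, mul_add, hX₁₀Y₀₁, hY₁₀X₀₁] using congr(u * $hXY.eq 1 1)

theorem comm_diag_mul (hX : QuantumSuperRel p q p₁ q₁ Z X) (hY : QuantumSuperRel p q p₂ q₂ Z Y)
    (hZX : Commute Z X) (hZY : Commute Z Y) :
    Z 0 0 * (X * Y) 1 1 - (X * Y) 1 1 * Z 0 0 =
      p • ((X * Y) 1 0 * Z 0 1) - q⁻¹ • (Z 1 0 * (X * Y) 0 1) := by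
  have hYZ : Z 0 0 * Y 0 1 + Z 0 1 * Y 1 1 = Y 0 0 * Z 0 1 + Y 0 1 * Z 1 1 := by
    simpa only [fin_two_mul_apply] using congr($hZY.eq 0 1)
  have hXZ : Z 1 0 * X 0 0 + Z 1 1 * X 1 0 = X 1 0 * Z 0 0 + X 1 1 * Z 1 0 := by
    simpa only [fin_two_mul_apply] using congr($hZX.eq 1 0)
  have hodd : SkewCommute (p * q) (Z 1 1) (X 1 0 * Y 0 1) :=
    (hX.diag_lower 1).mul_right (hY.diag_upper 1)
  calc
    _ = (Z 0 0 * X 1 0) * Y 0 1 - X 1 0 * (Y 0 1 * Z 0 0)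
        + (Z 0 0 * X 1 1 - X 1 1 * Z 0 0) * Y 1 1 + X 1 1 * (Z 0 0 * Y 1 1 - Y 1 1 * Z 0 0) := by
      simp only [fin_two_mul_apply]
      noncomm_ring
    _ = p • (X 1 0 * (Z 0 0 * Y 0 1 + Z 0 1 * Y 1 1)) + p • (X 1 1 * Y 1 0 * Z 0 1)
        - q⁻¹ • ((X 1 0 * Z 0 0 + X 1 1 * Z 1 0) * Y 0 1) - q⁻¹ • (Z 1 0 * X 0 1 * Y 1 1) := by
      rw [hX.diag_lower 0, (hY.diag_upper 0).symm, hX.comm_diag, hY.comm_diag]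
      simp only [mul_add, add_mul, mul_sub, sub_mul, smul_add, smul_mul_assoc, mul_smul_comm,
        mul_assoc]
      abel
    _ = p • (X 1 0 * Y 0 0 * Z 0 1) + p • (X 1 0 * Y 0 1 * Z 1 1) + p • (X 1 1 * Y 1 0 * Z 0 1)
        - q⁻¹ • (Z 1 0 * X 0 0 * Y 0 1) - q⁻¹ • (Z 1 1 * (X 1 0 * Y 0 1))
        - q⁻¹ • (Z 1 0 * X 0 1 * Y 1 1) := by
      -- Each of the two exchanges creates one term in `X₁₀ Y₀₁`; they cancel by `hodd`.
      rw [hYZ, ← hXZ]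
      simp only [mul_add, add_mul, smul_add, mul_assoc]
      abel
    _ = _ := by
      rw [hodd, smul_smul, mul_comm p, inv_mul_cancel_left]
      simp only [fin_two_mul_apply, mul_add, add_mul, smul_add, mul_assoc]
      abel

theorem diag_upper_mul_left (hX : QuantumSuperRel p₁ q₁ p q X Z)
    (hY : QuantumSuperRel p₂ q₂ p q Y Z) (hZX : Z 0 1 * X 0 1 = 0) (hZY : Z 0 1 * Y 0 1 = 0)
    (i : Fin 2) :
    SkewCommute (q₁ * q₂) ((X * Y) i i) (Z 0 1) := by
  have hdiag (i : Fin 2) := (hX.diag_upper i).mul_left (hY.diag_upper i)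
  have hupper_lower : SkewCommute (q₁ * q₂) (X 0 1 * Y 1 0) (Z 0 1) := by
    simpa [mul_assoc] using
      (SkewCommute.of_mul_eq_zero hX.upper_mul_upper hZX (-(q₁ * p))).mul_left hY.lower_upper
  have hlower_upper : SkewCommute (q₁ * q₂) (X 1 0 * Y 0 1) (Z 0 1) := by
    simpa [mul_assoc] using
      hX.lower_upper.mul_left (.of_mul_eq_zero hY.upper_mul_upper hZY (-(p * q₂)))
  rw [fin_two_mul_apply]
  match i with
  | 0 => exact (hdiag 0).add_left hupper_lower
  | 1 => exact hlower_upper.add_left (hdiag 1)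

theorem diag_upper_mul_right (hX : QuantumSuperRel p q p₁ q₁ Z X)
    (hY : QuantumSuperRel p q p₂ q₂ Z Y) (hZX : Commute Z X) (hZY : Commute Z Y)
    (hXZ : X 0 1 * Z 0 1 = 0) (hXY : X 0 1 * Y 0 1 = 0) (i : Fin 2) :
    SkewCommute q (Z i i) ((X * Y) 0 1) := by
  rw [fin_two_mul_apply]
  refine .add_right ?_ ?_
  · rw [SkewCommute, ← mul_assoc,
      hX.diag_mul_diag_mul_right hZX hY.upper_mul_upper hXY, mul_assoc, hY.diag_upper,
      mul_smul_comm, mul_assoc]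
  · rw [SkewCommute, ← mul_assoc, hX.diag_upper, smul_mul_assoc, mul_assoc, mul_assoc,
      hY.diag_mul_diag_mul_left hZY hXZ hXY]

theorem upper_lower_mul_left (hX : QuantumSuperRel p₁ q₁ p q X Z)
    (hY : QuantumSuperRel p₂ q₂ p q Y Z) :
    SkewCommute (-(p₁ * p₂ * q⁻¹)) ((X * Y) 0 1) (Z 1 0) := by
  rw [fin_two_mul_apply]
  refine .add_left ?_ ?_
  · simpa [mul_assoc] using (hX.diag_lower 0).mul_left hY.upper_lower
  · simpa [mul_right_comm] using hX.upper_lower.mul_left (hY.diag_lower 1)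

theorem upper_mul_upper_mul_left (hX : QuantumSuperRel p₁ q₁ p q X Z)
    (hY : QuantumSuperRel p₂ q₂ p q Y Z) : (X * Y) 0 1 * Z 0 1 = 0 := by
  rw [fin_two_mul_apply, add_mul, mul_assoc, hY.upper_mul_upper, mul_zero, zero_add, mul_assoc,
    hY.diag_upper, mul_smul_comm, ← mul_assoc, hX.upper_mul_upper, zero_mul, smul_zero]

theorem upper_mul_upper_mul_right (hX : QuantumSuperRel p₁ q₁ p q X Z)
    (hZX : Z 0 1 * X 0 1 = 0) (hZY : Z 0 1 * Y 0 1 = 0) : Z 0 1 * (X * Y) 0 1 = 0 := by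
  rw [fin_two_mul_apply, mul_add, (hX.diag_upper 0).symm.mul_mul_eq_zero hZY, ← mul_assoc, hZX,
    zero_mul, zero_add]

theorem comm_diag_of_flip (hul : SkewCommute (-(p * q₁⁻¹)) (X 0 1) (Y 1 0))
    (hlu : SkewCommute (-(q * p₁⁻¹)) (X 1 0) (Y 0 1))
    (h : Y 1 1 * X 0 0 - X 0 0 * Y 1 1 = q₁ • (X 0 1 * Y 1 0) - p₁⁻¹ • (Y 0 1 * X 1 0)) :
    X 0 0 * Y 1 1 - Y 1 1 * X 0 0 = p • (Y 1 0 * X 0 1) - q⁻¹ • (X 1 0 * Y 0 1) := by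
  rw [← neg_sub, h, hul, hlu]
  simp [smul_smul, Units.neg_smul, add_comm]

theorem mul_left (hXZ : QuantumSuperRel p₁ q₁ p q X Z) (hYZ : QuantumSuperRel p₂ q₂ p q Y Z)
    (hZX : QuantumSuperRel p q p₁ q₁ Z X) (hZY : QuantumSuperRel p q p₂ q₂ Z Y)
    (hcX : Commute Z X) (hcY : Commute Z Y) :
    QuantumSuperRel (p₁ * p₂) (q₁ * q₂) p q (X * Y) Z := by
  have hul := hXZ.upper_lower_mul_left hYZ
  have hlu := hXZ.swap.upper_lower_mul_left hYZ.swap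
  have hdl := hXZ.swap.diag_upper_mul_left hYZ.swap hZX.lower_mul_lower hZY.lower_mul_lower
  have hll := hXZ.swap.upper_mul_upper_mul_left hYZ.swap
  have hcomm := hZX.comm_diag_mul hZY hcX hcY
  have hcomm' := hZX.swap.comm_diag_mul hZY.swap (commute_paritySwap hcX)
    (commute_paritySwap hcY)
  rw [← paritySwap_mul] at hlu hdl hll hcomm'
  exact {
    diag_upper := hXZ.diag_upper_mul_left hYZ hZX.upper_mul_upper hZY.upper_mul_upper
    diag_lower i := by simpa [paritySwap] using hdl i.rev
    upper_lower := hul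
    lower_upper := hlu
    upper_mul_upper := hXZ.upper_mul_upper_mul_left hYZ
    lower_mul_lower := hll
    comm_diag := comm_diag_of_flip hul hlu hcomm'
    comm_diag_rev := comm_diag_of_flip hlu hul hcomm }

theorem mul_right (hZX : QuantumSuperRel p q p₁ q₁ Z X) (hZY : QuantumSuperRel p q p₂ q₂ Z Y)
    (hXZ : QuantumSuperRel p₁ q₁ p q X Z) (hYZ : QuantumSuperRel p₂ q₂ p q Y Z)
    (hXY : QuantumSuperRel p₁ q₁ p₂ q₂ X Y) (hcX : Commute Z X) (hcY : Commute Z Y) :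
    QuantumSuperRel p q (p₁ * p₂) (q₁ * q₂) Z (X * Y) := by
  have hcX' := commute_paritySwap hcX
  have hcY' := commute_paritySwap hcY
  have hlu := hXZ.swap.upper_lower_mul_left hYZ.swap
  have hdl := hZX.swap.diag_upper_mul_right hZY.swap hcX' hcY' hXZ.lower_mul_lower
    hXY.lower_mul_lower
  have hll := hXZ.swap.upper_mul_upper_mul_right (Y := paritySwap Y) hZX.lower_mul_lower
    hZY.lower_mul_lower
  have hcomm := hZX.swap.comm_diag_mul hZY.swap hcX' hcY'
  rw [← paritySwap_mul] at hlu hdl hll hcomm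
  exact {
    diag_upper := hZX.diag_upper_mul_right hZY hcX hcY hXZ.upper_mul_upper hXY.upper_mul_upper
    diag_lower i := by simpa [paritySwap] using hdl i.rev
    upper_lower := by simpa [paritySwap] using hlu.symm
    lower_upper := by simpa using (hXZ.upper_lower_mul_left hYZ).symm
    upper_mul_upper := hXZ.upper_mul_upper_mul_right hZX.upper_mul_upper hZY.upper_mul_upper
    lower_mul_lower := hll
    comm_diag := hZX.comm_diag_mul hZY hcX hcY
    comm_diag_rev := hcomm }

theorem one_left : QuantumSuperRel 1 1 p q 1 X := by
  constructor <;> simp [SkewCommute]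

theorem one_right : QuantumSuperRel p q 1 1 X 1 := by
  constructor <;> simp [SkewCommute]

theorem pow_pow {M : Matrix (Fin 2) (Fin 2) A} (h : QuantumSuperRel p q p q M M) (m n : ℕ) :
    QuantumSuperRel (p ^ m) (q ^ m) (p ^ n) (q ^ n) (M ^ m) (M ^ n) := by
  have hM (m : ℕ) : QuantumSuperRel (p ^ m) (q ^ m) p q (M ^ m) M ∧
      QuantumSuperRel p q (p ^ m) (q ^ m) M (M ^ m) := by
    induction m with
    | zero => simpa using ⟨one_left, one_right⟩
    | succ m ih =>
      have hc : Commute M (M ^ m) := .self_pow M m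
      simp only [pow_succ]
      exact ⟨ih.1.mul_left h ih.2 h hc rfl, ih.2.mul_right h ih.1 h ih.1 hc rfl⟩
  suffices QuantumSuperRel (p ^ m) (q ^ m) (p ^ n) (q ^ n) (M ^ m) (M ^ n) ∧
    QuantumSuperRel (p ^ n) (q ^ n) (p ^ m) (q ^ m) (M ^ n) (M ^ m) from this.1
  induction n with
  | zero => simpa using ⟨one_right, one_left⟩
  | succ n ih =>
    have hc : Commute (M ^ m) (M ^ n) := .pow_pow_self M m n
    have hc' : Commute (M ^ m) M := .pow_self M m
    simp only [pow_succ]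
    exact ⟨ih.1.mul_right (hM m).1 ih.2 (hM m).2 (hM n).1 hc hc',
      ih.2.mul_left (hM m).2 ih.1 (hM m).1 hc hc'⟩

end QuantumSuperRel

/-- A quantum supermatrix with even diagonal and odd off-diagonal entries, with deformation
parameters `p` and `q`. -/
structure IsQuantumSupermatrix (p q : Rˣ) (M : Matrix (Fin 2) (Fin 2) A) : Prop where
  diag_upper (i : Fin 2) : SkewCommute q (M i i) (M 0 1)
  diag_lower (i : Fin 2) : SkewCommute p (M i i) (M 1 0)
  upper_lower : SkewCommute (-(p * q⁻¹)) (M 0 1) (M 1 0)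
  upper_mul_self : M 0 1 * M 0 1 = 0
  lower_mul_self : M 1 0 * M 1 0 = 0
  comm_diag : M 0 0 * M 1 1 - M 1 1 * M 0 0 = p • (M 1 0 * M 0 1) - q⁻¹ • (M 1 0 * M 0 1)

namespace IsQuantumSupermatrix

variable {p q : Rˣ} {M : Matrix (Fin 2) (Fin 2) A}

theorem quantumSuperRel (h : IsQuantumSupermatrix p q M) : QuantumSuperRel p q p q M M where
  diag_upper := h.diag_upper
  diag_lower := h.diag_lower
  upper_lower := h.upper_lower
  lower_upper := by simpa using h.upper_lower.symm
  upper_mul_upper := h.upper_mul_self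
  lower_mul_lower := h.lower_mul_self
  comm_diag := h.comm_diag
  comm_diag_rev := by
    rw [← neg_sub, h.comm_diag, h.upper_lower]
    simp [smul_smul, Units.neg_smul, neg_add_eq_sub, sub_neg_eq_add]

theorem pow (h : IsQuantumSupermatrix p q M) (n : ℕ) :
    IsQuantumSupermatrix (p ^ n) (q ^ n) (M ^ n) :=
  have hn := h.quantumSuperRel.pow_pow n n
  { diag_upper := hn.diag_upper
    diag_lower := hn.diag_lower
    upper_lower := hn.upper_lower
    upper_mul_self := hn.upper_mul_upper
    lower_mul_self := hn.lower_mul_lower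
    comm_diag := hn.comm_diag }

end IsQuantumSupermatrix

/-- The odd element `θ` with `(M ^ 2) 0 1 = M 0 1 * θ`, for `M` satisfying the `Gr_{p,q}(1|1)`
relations; its counterpart for the entry `(1, 0)` is `oddFactor q (paritySwap M)`. -/
def oddFactor (p : Rˣ) (M : Matrix (Fin 2) (Fin 2) A) : A :=
  p⁻¹ • M 0 0 + M 1 1

/-- The `Gr_{p,q}(1|1)` relations for the matrix with rows `(α, b)` and `(c, δ)`. -/
structure IsGrassmannSupermatrix (p q : Rˣ) (M : Matrix (Fin 2) (Fin 2) A) : Prop where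
  diag_upper (i : Fin 2) : SkewCommute p⁻¹ (M i i) (M 0 1)
  diag_lower (i : Fin 2) : SkewCommute q⁻¹ (M i i) (M 1 0)
  diag_mul_self (i : Fin 2) : M i i * M i i = 0
  diag_anticomm : M 0 0 * M 1 1 = -(M 1 1 * M 0 0)
  upper_mul_lower : M 0 1 * M 1 0 =
    (p * q⁻¹) • (M 1 0 * M 0 1) + (p • (M 1 1 * M 0 0) - q⁻¹ • (M 1 1 * M 0 0))

namespace IsGrassmannSupermatrix

variable {p q : Rˣ} {M : Matrix (Fin 2) (Fin 2) A}

theorem swap (h : IsGrassmannSupermatrix p q M) :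
    IsGrassmannSupermatrix q p (paritySwap M) where
  diag_upper i := h.diag_lower i.rev
  diag_lower i := h.diag_upper i.rev
  diag_mul_self i := h.diag_mul_self i.rev
  diag_anticomm := (neg_eq_iff_eq_neg.2 h.diag_anticomm).symm
  upper_mul_lower := by
    change M 1 0 * M 0 1 = (q * p⁻¹) • (M 0 1 * M 1 0) +
      (q • (M 0 0 * M 1 1) - p⁻¹ • (M 0 0 * M 1 1))
    rw [h.upper_mul_lower, h.diag_anticomm]
    simp only [smul_add, smul_sub, smul_neg, smul_smul, mul_assoc, inv_mul_cancel_left,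
      mul_inv_cancel, inv_mul_cancel, mul_left_comm q, sub_neg_eq_add, mul_one, one_smul]
    abel

theorem oddFactor_upper (h : IsGrassmannSupermatrix p q M) :
    SkewCommute p⁻¹ (oddFactor p M) (M 0 1) :=
  ((h.diag_upper 0).smul_left p⁻¹).add_left (h.diag_upper 1)

theorem oddFactor_lower (h : IsGrassmannSupermatrix p q M) :
    SkewCommute q⁻¹ (oddFactor p M) (M 1 0) :=
  ((h.diag_lower 0).smul_left p⁻¹).add_left (h.diag_lower 1)

theorem oddFactor_mul_self (h : IsGrassmannSupermatrix p q M) :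
    oddFactor p M * oddFactor p M = 0 := by
  simp [oddFactor, mul_add, add_mul, smul_mul_assoc, mul_smul_comm, h.diag_mul_self,
    h.diag_anticomm]

theorem oddFactor_mul_oddFactor_paritySwap (h : IsGrassmannSupermatrix p q M) :
    oddFactor p M * oddFactor q (paritySwap M) =
      M 1 1 * M 0 0 - (p⁻¹ * q⁻¹) • (M 1 1 * M 0 0) := by
  change (p⁻¹ • M 0 0 + M 1 1) * (q⁻¹ • M 1 1 + M 0 0) = _
  simp [mul_add, add_mul, smul_mul_assoc, mul_smul_comm, h.diag_mul_self, h.diag_anticomm,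
    smul_smul, sub_eq_neg_add, mul_comm]

theorem oddFactor_anticomm (h : IsGrassmannSupermatrix p q M) :
    oddFactor q (paritySwap M) * oddFactor p M = -(oddFactor p M * oddFactor q (paritySwap M)) := by
  have h' : oddFactor q (paritySwap M) * oddFactor p M =
      M 0 0 * M 1 1 - (q⁻¹ * p⁻¹) • (M 0 0 * M 1 1) :=
    h.swap.oddFactor_mul_oddFactor_paritySwap
  rw [h', h.oddFactor_mul_oddFactor_paritySwap, h.diag_anticomm, smul_neg, mul_comm q⁻¹]
  abel

theorem upper_mul_lower_mul_oddFactor (h : IsGrassmannSupermatrix p q M) :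
    M 0 1 * M 1 0 * oddFactor p M = (p * q⁻¹) • (M 1 0 * M 0 1 * oddFactor p M) := by
  have hodd : M 1 1 * M 0 0 * oddFactor p M = 0 := by
    rw [oddFactor, mul_add, mul_smul_comm, mul_assoc, mul_assoc, h.diag_mul_self, h.diag_anticomm,
      mul_neg, ← mul_assoc, h.diag_mul_self, zero_mul, mul_zero, smul_zero, neg_zero, add_zero]
  simp only [h.upper_mul_lower, add_mul, sub_mul, smul_mul_assoc, hodd, smul_zero, sub_zero,
    add_zero]

theorem upper_mul_lower_mul_upper_mul_oddFactor (h : IsGrassmannSupermatrix p q M) :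
    M 0 1 * M 1 0 * (M 0 1 * oddFactor p M) =
      (p * q⁻¹) • (M 1 0 * M 0 1 * (M 0 1 * oddFactor p M)) := by
  rw [h.oddFactor_upper.symm.eq, mul_smul_comm, ← mul_assoc, h.upper_mul_lower_mul_oddFactor,
    smul_mul_assoc, smul_comm, mul_smul_comm, mul_assoc _ (oddFactor p M)]

theorem sq_zero_zero (h : IsGrassmannSupermatrix p q M) : (M ^ 2) 0 0 = M 0 1 * M 1 0 := by
  rw [sq, fin_two_mul_apply, h.diag_mul_self, zero_add]

theorem sq_one_one (h : IsGrassmannSupermatrix p q M) : (M ^ 2) 1 1 = M 1 0 * M 0 1 := by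
  rw [sq, fin_two_mul_apply, h.diag_mul_self, add_zero]

theorem sq_zero_one (h : IsGrassmannSupermatrix p q M) :
    (M ^ 2) 0 1 = M 0 1 * oddFactor p M := by
  rw [sq, fin_two_mul_apply, h.diag_upper, oddFactor, mul_add, mul_smul_comm]

theorem sq_one_zero (h : IsGrassmannSupermatrix p q M) :
    (M ^ 2) 1 0 = M 1 0 * oddFactor q (paritySwap M) := by
  change _ = M 1 0 * (q⁻¹ • M 1 1 + M 0 0)
  rw [sq, fin_two_mul_apply, h.diag_lower, mul_add, mul_smul_comm, add_comm]

theorem sq_diag_upper (h : IsGrassmannSupermatrix p q M) (i : Fin 2) :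
    SkewCommute (q ^ 2) ((M ^ 2) i i) ((M ^ 2) 0 1) := by
  suffices SkewCommute (q ^ 2)⁻¹ ((M ^ 2) 0 1) ((M ^ 2) i i) by simpa using this.symm
  have hpq : q⁻¹ * p⁻¹ * (p * q⁻¹) = (q ^ 2)⁻¹ := by simp [pow_two, mul_assoc]
  rw [SkewCommute, h.sq_zero_one, ← hpq, mul_smul]
  match i with
  | 0 =>
    rw [h.sq_zero_zero, mul_assoc, h.oddFactor_upper.mul_right h.oddFactor_lower,
      h.upper_mul_lower_mul_oddFactor]
    simp only [mul_smul_comm, mul_assoc, mul_comm p⁻¹]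
  | 1 =>
    rw [h.sq_one_one, mul_assoc, h.oddFactor_lower.mul_right h.oddFactor_upper, mul_smul_comm,
      ← h.upper_mul_lower_mul_upper_mul_oddFactor]
    simp only [mul_assoc]

theorem sq_upper_mul_self (h : IsGrassmannSupermatrix p q M) :
    (M ^ 2) 0 1 * (M ^ 2) 0 1 = 0 := by
  rw [h.sq_zero_one, mul_assoc, h.oddFactor_upper.mul_mul_eq_zero h.oddFactor_mul_self, mul_zero]

theorem sq_lower_mul_upper (h : IsGrassmannSupermatrix p q M) :
    (M ^ 2) 1 0 * (M ^ 2) 0 1 = -p⁻¹ • (M 1 0 * M 0 1 *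
      (oddFactor p M * oddFactor q (paritySwap M))) := by
  have hupper : SkewCommute p⁻¹ (oddFactor q (paritySwap M)) (M 0 1) := h.swap.oddFactor_lower
  rw [h.sq_zero_one, h.sq_one_zero, mul_assoc, ← mul_assoc _ (M 0 1), hupper, smul_mul_assoc,
    mul_assoc, h.oddFactor_anticomm]
  simp [mul_assoc, mul_smul_comm, Units.neg_smul]

theorem sq_upper_lower (h : IsGrassmannSupermatrix p q M) :
    SkewCommute (-(p ^ 2 * (q ^ 2)⁻¹)) ((M ^ 2) 0 1) ((M ^ 2) 1 0) := by
  have hpq : -(p ^ 2 * (q ^ 2)⁻¹) * -p⁻¹ = q⁻¹ * (p * q⁻¹) := by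
    simp only [neg_mul_neg, pow_two, mul_inv]
    rw [mul_right_comm, mul_inv_cancel_right, mul_left_comm]
  rw [SkewCommute, h.sq_lower_mul_upper, h.sq_zero_one, h.sq_one_zero, smul_smul, hpq, mul_assoc,
    ← mul_assoc _ (M 1 0), h.oddFactor_lower, smul_mul_assoc, mul_smul_comm, mul_smul, ← mul_assoc,
    ← mul_assoc, h.upper_mul_lower_mul_oddFactor, smul_mul_assoc, mul_assoc _ (oddFactor p M)]

theorem sq_comm_diag (h : IsGrassmannSupermatrix p q M) :
    (M ^ 2) 0 0 * (M ^ 2) 1 1 - (M ^ 2) 1 1 * (M ^ 2) 0 0 =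
      p ^ 2 • ((M ^ 2) 1 0 * (M ^ 2) 0 1) - (q ^ 2)⁻¹ • ((M ^ 2) 1 0 * (M ^ 2) 0 1) := by
  have hdiag : SkewCommute (q⁻¹ * q⁻¹ * (p⁻¹ * p⁻¹)) (M 1 1 * M 0 0) (M 1 0 * M 0 1) :=
    ((h.diag_lower 1).mul_left (h.diag_lower 0)).mul_right
      ((h.diag_upper 1).mul_left (h.diag_upper 0))
  have hcoeff₁ : p * (q⁻¹ * q⁻¹ * (p⁻¹ * p⁻¹)) = (q ^ 2)⁻¹ * p⁻¹ := by
    simp [pow_two, mul_left_comm p]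
  have hcoeff₂ : q⁻¹ * (q⁻¹ * q⁻¹ * (p⁻¹ * p⁻¹)) = (q ^ 2)⁻¹ * (p⁻¹ * (p⁻¹ * q⁻¹)) := by
    simp only [pow_two, mul_inv, mul_assoc, mul_comm, mul_left_comm]
  have hcoeff₃ : p ^ 2 * p⁻¹ = p := by simp [pow_two]
  have hcoeff₄ : p ^ 2 * (p⁻¹ * (p⁻¹ * q⁻¹)) = q⁻¹ := by simp [pow_two, mul_assoc]
  rw [h.sq_lower_mul_upper, h.oddFactor_mul_oddFactor_paritySwap, h.sq_zero_zero, h.sq_one_one,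
    h.upper_mul_lower]
  simp only [add_mul, mul_add, sub_mul, mul_sub, smul_mul_assoc, mul_smul_comm, hdiag.eq, smul_sub,
    smul_smul, neg_mul, Units.neg_smul, smul_neg, hcoeff₁, hcoeff₂, hcoeff₃, hcoeff₄]
  abel

theorem sq (h : IsGrassmannSupermatrix p q M) :
    IsQuantumSupermatrix (p ^ 2) (q ^ 2) (M ^ 2) where
  diag_upper := h.sq_diag_upper
  diag_lower i := by
    have hswap := h.swap.sq_diag_upper i.rev
    rw [← paritySwap_sq] at hswap
    simpa [paritySwap] using hswap
  upper_lower := h.sq_upper_lower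
  upper_mul_self := h.sq_upper_mul_self
  lower_mul_self := by
    have hswap := h.swap.sq_upper_mul_self
    rwa [← paritySwap_sq] at hswap
  comm_diag := h.sq_comm_diag

end IsGrassmannSupermatrix

theorem grassmann_super_even_power_relations_general {p q : Rˣ} {M : Matrix (Fin 2) (Fin 2) A}
    (hM : IsGrassmannSupermatrix p q M) (n : ℕ) :
    IsQuantumSupermatrix (p ^ (2 * n)) (q ^ (2 * n)) (M ^ (2 * n)) := by
  simpa only [pow_mul] using hM.sq.pow n

end Supermatrix

/-- Under the Gr_{p,q}(1|1) relations, the entries A, B, C, D of Â^{2n} satisfy the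
commutation relations of a quantum supermatrix with even diagonal and odd
off-diagonal entries, with parameters built from p^{2n} and q^{2n}. -/
theorem grassmann_super_even_power_relations
    (A : Type*) [Ring A] [Algebra ℂ A] (p q : ℂ) (hp : p ≠ 0) (hq : q ≠ 0)
    (α b c δ : A)
    (hαb : α * b = p⁻¹ • (b * α)) (hαc : α * c = q⁻¹ • (c * α))
    (hδb : δ * b = p⁻¹ • (b * δ)) (hδc : δ * c = q⁻¹ • (c * δ))
    (hαδ : α * δ + δ * α = 0) (hα2 : α ^ 2 = 0) (hδ2 : δ ^ 2 = 0)
    (hbc : b * c = (p * q⁻¹) • (c * b) + (p - q⁻¹) • (δ * α))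
    (n : ℕ) (hn : 1 ≤ n)
    (A₀ B₀ C₀ D₀ : A)
    (hA₀ : A₀ = ((!![α, b; c, δ] : Matrix (Fin 2) (Fin 2) A) ^ (2 * n)) 0 0)
    (hB₀ : B₀ = ((!![α, b; c, δ] : Matrix (Fin 2) (Fin 2) A) ^ (2 * n)) 0 1)
    (hC₀ : C₀ = ((!![α, b; c, δ] : Matrix (Fin 2) (Fin 2) A) ^ (2 * n)) 1 0)
    (hD₀ : D₀ = ((!![α, b; c, δ] : Matrix (Fin 2) (Fin 2) A) ^ (2 * n)) 1 1) :
    A₀ * B₀ = q ^ (2 * n) • (B₀ * A₀) ∧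
      A₀ * C₀ = p ^ (2 * n) • (C₀ * A₀) ∧
      D₀ * B₀ = q ^ (2 * n) • (B₀ * D₀) ∧
      D₀ * C₀ = p ^ (2 * n) • (C₀ * D₀) ∧
      B₀ * C₀ + (p ^ (2 * n) * (q ^ (2 * n))⁻¹) • (C₀ * B₀) = 0 ∧
      B₀ ^ 2 = 0 ∧ C₀ ^ 2 = 0 ∧
      A₀ * D₀ - D₀ * A₀ = (p ^ (2 * n) - (q ^ (2 * n))⁻¹) • (C₀ * B₀) := by
  have hM : IsGrassmannSupermatrix (Units.mk0 p hp) (Units.mk0 q hq) !![α, b; c, δ] :=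
    { diag_upper := Fin.forall_fin_two.2 ⟨hαb, hδb⟩
      diag_lower := Fin.forall_fin_two.2 ⟨hαc, hδc⟩
      diag_mul_self := Fin.forall_fin_two.2 ⟨(pow_two α).symm.trans hα2, (pow_two δ).symm.trans hδ2⟩
      diag_anticomm := eq_neg_of_add_eq_zero_left hαδ
      upper_mul_lower := by rwa [sub_smul] at hbc }
  have h := grassmann_super_even_power_relations_general hM n
  subst hA₀ hB₀ hC₀ hD₀
  refine ⟨h.diag_upper 0, h.diag_lower 0, h.diag_upper 1, h.diag_lower 1, ?_, ?_, ?_, ?_⟩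
  · simpa [Units.smul_def, add_eq_zero_iff_eq_neg] using h.upper_lower.eq
  · rw [pow_two, h.upper_mul_self]
  · rw [pow_two, h.lower_mul_self]
  · simpa [Units.smul_def, sub_smul] using h.comm_diag
end
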